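/- Let ω be a trap-free G-orbit of admissible 6-tuples such that no 6-tuple in ω has two of its components q₀,q₁,q₂ equal to 0 (this holds whenever ω represents a 3-manifold of genus two). Then for every f∈ω there exists f′∈ω with ν(f′)>ν(f); consequently ω is an infinite set and the complexity ν is unbounded on ω. -/

import Mathlib

/-!
Common setup: 6-tuples, the coloured graph Γ(f), conditions (I)–(VI),
the maps ψ₁, ψ₂, ψ₃, σ, equivalences, traps, canonical/minimal/root tuples.
-/

namespace GMN

/-- A 6-tuple `(h₀,h₁,h₂;q₀,q₁,q₂)` of integers. -/
structure Tuple where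
  h0 : ℤ
  h1 : ℤ
  h2 : ℤ
  q0 : ℤ
  q1 : ℤ
  q2 : ℤ

namespace Tuple

/-- The `h`-components indexed by `ℤ₃`. -/
def h (f : Tuple) : ZMod 3 → ℤ := fun i => if i = 0 then f.h0 else if i = 1 then f.h1 else f.h2

/-- The `q`-components indexed by `ℤ₃`. -/
def q (f : Tuple) : ZMod 3 → ℤ := fun i => if i = 0 then f.q0 else if i = 1 then f.q1 else f.q2

/-- `2lᵢ = h_{i-1} + hᵢ`. -/
def twol (f : Tuple) (i : ZMod 3) : ℤ := f.h (i - 1) + f.h i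

end Tuple

/-- Condition (I): all `hᵢ` positive. -/
def CondI (f : Tuple) : Prop := ∀ i, 0 < f.h i

/-- Condition (II): all `hᵢ` of the same parity. -/
def CondII (f : Tuple) : Prop := ∀ i j, f.h i % 2 = f.h j % 2

/-- Condition (III): `0 ≤ qᵢ < 2lᵢ`. -/
def CondIII (f : Tuple) : Prop := ∀ i, 0 ≤ f.q i ∧ f.q i < f.twol i

/-- Condition (IV): all `qᵢ` of the same parity. -/
def CondIV (f : Tuple) : Prop := ∀ i j, f.q i % 2 = f.q j % 2

/-- Conditions (I)–(IV) together. -/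
def CondsI_IV (f : Tuple) : Prop := CondI f ∧ CondII f ∧ CondIII f ∧ CondIV f

/-- Condition (V): `hᵢ + qᵢ` odd. -/
def CondV (f : Tuple) : Prop := ∀ i, (f.h i + f.q i) % 2 = 1

/-- The vertex set `V(f) = ⋃ᵢ {i} × ℤ_{2lᵢ}`, with second coordinates as least
nonnegative residues. -/
def Vtx (f : Tuple) : Set (ZMod 3 × ℤ) := {p | 0 ≤ p.2 ∧ p.2 < f.twol p.1}

/-- `ι₀(i,j) = (i, j + (−1)^j)`, second coordinate mod `2lᵢ`. -/
def iota0 (f : Tuple) (p : ZMod 3 × ℤ) : ZMod 3 × ℤ :=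
  (p.1, (if p.2 % 2 = 0 then p.2 + 1 else p.2 - 1) % f.twol p.1)

/-- `ι₁(i,j) = (i, j − (−1)^j)`, second coordinate mod `2lᵢ`. -/
def iota1 (f : Tuple) (p : ZMod 3 × ℤ) : ZMod 3 × ℤ :=
  (p.1, (if p.2 % 2 = 0 then p.2 - 1 else p.2 + 1) % f.twol p.1)

/-- `ι₂(i,j) = (i+1, −j−1)` if `0 ≤ j ≤ hᵢ−1`, and `(i−1, 2lᵢ−j−1)` if `hᵢ ≤ j ≤ 2lᵢ−1`. -/
def iota2 (f : Tuple) (p : ZMod 3 × ℤ) : ZMod 3 × ℤ :=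
  if p.2 < f.h p.1 then (p.1 + 1, (-p.2 - 1) % f.twol (p.1 + 1))
  else (p.1 - 1, (f.twol p.1 - p.2 - 1) % f.twol (p.1 - 1))

/-- `ρ(i,j) = (i, j + qᵢ)`. -/
def rho (f : Tuple) (p : ZMod 3 × ℤ) : ZMod 3 × ℤ :=
  (p.1, (p.2 + f.q p.1) % f.twol p.1)

/-- `ρ⁻¹(i,j) = (i, j − qᵢ)`. -/
def rhoInv (f : Tuple) (p : ZMod 3 × ℤ) : ZMod 3 × ℤ :=
  (p.1, (p.2 - f.q p.1) % f.twol p.1)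

/-- `ι₃ = ρ ∘ ι₂ ∘ ρ⁻¹`. -/
def iota3 (f : Tuple) : ZMod 3 × ℤ → ZMod 3 × ℤ :=
  rho f ∘ iota2 f ∘ rhoInv f

/-- The four involutions of `Γ(f)`, indexed by the colour `c ∈ {0,1,2,3}`. -/
def iota (f : Tuple) : Fin 4 → ZMod 3 × ℤ → ZMod 3 × ℤ
  | 0 => iota0 f
  | 1 => iota1 f
  | 2 => iota2 f
  | 3 => iota3 f

/-- One step along an edge of `Γ(f)` whose colour lies in `S`, within `V(f)`. -/
def Step (f : Tuple) (S : Set (Fin 4)) (a b : ZMod 3 × ℤ) : Prop :=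
  a ∈ Vtx f ∧ b ∈ Vtx f ∧ ∃ c ∈ S, b = iota f c a

/-- The orbit relation on `V(f)` of the subgroup generated by the involutions with
colours in `S` (the `S`-residue relation). -/
def OrbRel (f : Tuple) (S : Set (Fin 4)) : ZMod 3 × ℤ → ZMod 3 × ℤ → Prop :=
  Relation.EqvGen (Step f S)

/-- The subgroup generated by the colours in `S` has exactly three orbits on `V(f)`. -/
def ThreeOrbits (f : Tuple) (S : Set (Fin 4)) : Prop :=
  ∃ a b c, a ∈ Vtx f ∧ b ∈ Vtx f ∧ c ∈ Vtx f ∧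
    ¬ OrbRel f S a b ∧ ¬ OrbRel f S a c ∧ ¬ OrbRel f S b c ∧
    ∀ v ∈ Vtx f, OrbRel f S a v ∨ OrbRel f S b v ∨ OrbRel f S c v

/-- Admissibility: conditions (I)–(IV), (V), and (VI) (three `{2,3}`-residues). -/
def Admissible (f : Tuple) : Prop :=
  CondsI_IV f ∧ CondV f ∧ ThreeOrbits f {2, 3}

/-- `ψ₁(h₀,h₁,h₂;q₀,q₁,q₂) = (h₁,h₂,h₀;q₁,q₂,q₀)`. -/
def psi1 (f : Tuple) : Tuple := ⟨f.h1, f.h2, f.h0, f.q1, f.q2, f.q0⟩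

/-- `ψ₂(h₀,h₁,h₂;q₀,q₁,q₂) = (h₂,h₁,h₀;q₀,q₂,q₁)`. -/
def psi2 (f : Tuple) : Tuple := ⟨f.h2, f.h1, f.h0, f.q0, f.q2, f.q1⟩

/-- `ψ₃(h₀,h₁,h₂;q₀,q₁,q₂) = (h₀,h₁,h₂;−q₀,−q₁,−q₂)`, the `q`-entries reduced to their
least nonnegative residues mod the respective `2lᵢ`. -/
def psi3 (f : Tuple) : Tuple :=
  ⟨f.h0, f.h1, f.h2,
    (-f.q0) % (f.h2 + f.h0), (-f.q1) % (f.h0 + f.h1), (-f.q2) % (f.h1 + f.h2)⟩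

/-- The 2-symmetric transformation `σ`, with the `q′`-entries reduced to their least
nonnegative residues mod the respective `2lᵢ′ = h′_{i−1} + h′ᵢ`. -/
def sigma (f : Tuple) : Tuple :=
  if f.q0 = 0 then f
  else if f.q0 < f.h0 ∧ f.q0 < f.h2 then
    ⟨f.h0 + f.h1 - f.q0, f.q0, f.h2 + f.h1 - f.q0,
      (f.h0 + f.h1 + f.h2 - 2 * f.q0) % ((f.h2 + f.h1 - f.q0) + (f.h0 + f.h1 - f.q0)),
      (f.q0 + f.q1 + f.h1) % ((f.h0 + f.h1 - f.q0) + f.q0),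
      (f.q0 + f.q2 + f.h1) % (f.q0 + (f.h2 + f.h1 - f.q0))⟩
  else if f.h0 < f.q0 ∧ f.h2 < f.q0 then
    ⟨f.q0 + f.h1 - f.h2, f.h0 + f.h2 - f.q0, f.q0 + f.h1 - f.h0,
      f.h1 % ((f.q0 + f.h1 - f.h0) + (f.q0 + f.h1 - f.h2)),
      (f.q0 + f.q1 - f.h2) % ((f.q0 + f.h1 - f.h2) + (f.h0 + f.h2 - f.q0)),
      (f.q0 + f.q2 - f.h0) % ((f.h0 + f.h2 - f.q0) + (f.q0 + f.h1 - f.h0))⟩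
  else if f.q0 < f.h2 then
    ⟨f.h1, f.h0, f.h1 + f.h2 - f.h0,
      (f.h1 + f.h2 - f.q0) % ((f.h1 + f.h2 - f.h0) + f.h1),
      f.q1 % (f.h1 + f.h0),
      (2 * f.q0 + f.q2 + f.h1 - f.h0) % (f.h0 + (f.h1 + f.h2 - f.h0))⟩
  else
    ⟨f.h1 + f.h0 - f.h2, f.h2, f.h1,
      (f.h1 + f.h0 - f.q0) % (f.h1 + (f.h1 + f.h0 - f.h2)),
      (2 * f.q0 + f.q1 + f.h1 - f.h2) % ((f.h1 + f.h0 - f.h2) + f.h2),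
      f.q2 % (f.h2 + f.h1)⟩

/-- The complexity `ν(f) = h₀ + h₁ + h₂`. -/
def nu (f : Tuple) : ℤ := f.h0 + f.h1 + f.h2

/-- `δ(f) = ν(σ(f)) − ν(f)`. -/
def delta (f : Tuple) : ℤ := nu (sigma f) - nu f

/-- One step of the action of a generator of `H` on admissible 6-tuples. -/
def HStep (a b : Tuple) : Prop :=
  Admissible a ∧ Admissible b ∧ (b = psi1 a ∨ b = psi2 a ∨ b = psi3 a)

/-- `H`-equivalence: the orbit relation of `H = ⟨ψ₁,ψ₂,ψ₃⟩` on `ℱ`. -/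
def HEquiv : Tuple → Tuple → Prop := Relation.EqvGen HStep

/-- One step of the action of a generator of `H′` on admissible 6-tuples. -/
def H'Step (a b : Tuple) : Prop :=
  Admissible a ∧ Admissible b ∧ (b = psi2 a ∨ b = psi3 a)

/-- `H′`-equivalence: the orbit relation of `H′ = ⟨ψ₂,ψ₃⟩` on `ℱ`. -/
def H'Equiv : Tuple → Tuple → Prop := Relation.EqvGen H'Step

/-- One step of the action of a generator of `G` on admissible 6-tuples. -/
def GStep (a b : Tuple) : Prop :=
  Admissible a ∧ Admissible b ∧ (b = psi1 a ∨ b = psi2 a ∨ b = psi3 a ∨ b = sigma a)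

/-- `G`-equivalence: the orbit relation of `G = ⟨ψ₁,ψ₂,ψ₃,σ⟩` on `ℱ`. -/
def GEquiv : Tuple → Tuple → Prop := Relation.EqvGen GStep

/-- Membership in the set `{0, r+1, r+2, …, s−1}`. -/
def inT (r s x : ℤ) : Prop := x = 0 ∨ (r < x ∧ x < s)

/-- A trap of type `(r,s)`: `H`-equivalent to an admissible `(r,r,s;q₀,0,q₂)` with
`q₀+k(q₀+q₂), q₂+k(q₀+q₂) ∈ {0,r+1,…,s−1} (mod r+s)` for all `k ≥ 0`. -/
def IsTrapOfType (r s : ℤ) (f : Tuple) : Prop :=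
  ∃ g : Tuple, Admissible g ∧ HEquiv f g ∧
    g.h0 = r ∧ g.h1 = r ∧ g.h2 = s ∧ g.q1 = 0 ∧
    ∀ k : ℕ, inT r s ((g.q0 + (k : ℤ) * (g.q0 + g.q2)) % (r + s)) ∧
             inT r s ((g.q2 + (k : ℤ) * (g.q0 + g.q2)) % (r + s))

/-- A trap: a trap of some type `(r,s)` with `0 < r ≤ s`. -/
def IsTrap (f : Tuple) : Prop := ∃ r s : ℤ, 0 < r ∧ r ≤ s ∧ IsTrapOfType r s f

/-- The canonical representative conditions (a)–(i) (together with admissibility). -/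
def Canonical (f : Tuple) : Prop :=
  Admissible f ∧
  (f.h0 ≤ f.h1 ∧ f.h1 ≤ f.h2) ∧
  (2 * f.q0 ≤ f.h2 + f.h0) ∧
  ((f.q0 = 0 ∨ 2 * f.q0 = f.h2 + f.h0) → 2 * f.q1 ≤ f.h0 + f.h1) ∧
  ((f.q0 = 0 ∨ 2 * f.q0 = f.h2 + f.h0) → (f.q1 = 0 ∨ 2 * f.q1 = f.h0 + f.h1) →
    2 * f.q2 ≤ f.h1 + f.h2) ∧
  (f.h0 = f.h1 → f.q0 ≤ f.q2 ∧ f.q2 ≤ (-f.q0) % (f.h2 + f.h0)) ∧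
  (f.h0 = f.h1 → (f.q2 = f.q0 ∨ f.q2 = (-f.q0) % (f.h2 + f.h0)) → f.q1 ≤ f.h1) ∧
  (f.h1 = f.h2 → f.q0 ≤ f.q1 ∧ f.q1 ≤ (-f.q0) % (f.h2 + f.h0)) ∧
  (f.h1 = f.h2 → (f.q1 = f.q0 ∨ f.q1 = (-f.q0) % (f.h2 + f.h0)) → f.q2 ≤ f.h2) ∧
  (f.h0 = f.h1 ∧ f.h1 = f.h2 → f.q1 ≤ f.q2)

/-- A canonical 6-tuple is minimal if its complexity is minimal in its `G`-orbit. -/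
def Minimal (f : Tuple) : Prop :=
  Canonical f ∧ ∀ g, GEquiv f g → nu f ≤ nu g

/-- A canonical 6-tuple is a root if every `G`-equivalent but not `H`-equivalent
6-tuple has strictly larger complexity. -/
def Root (f : Tuple) : Prop :=
  Canonical f ∧ ∀ g, GEquiv f g → ¬ HEquiv f g → nu f < nu g

/-- A colour-preserving isomorphism between `Γ(f)` and `Γ(f′)`. -/
def CPIso (f f' : Tuple) : Prop :=
  ∃ φ : ZMod 3 × ℤ → ZMod 3 × ℤ, Set.BijOn φ (Vtx f) (Vtx f') ∧
    ∀ c : Fin 4, ∀ v ∈ Vtx f, φ (iota f c v) = iota f' c (φ v)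

/-- The set of admissible 6-tuples, as a type. -/
abbrev AdmTuple := {f : Tuple // Admissible f}

/-!
The orbits of `⟨ι₂, ι₃⟩` are the closed curves traced by the arcs of colours 2 and 3 between the
circles 0, 1 and 2. They form a quotient of `ℤ₃ × ℤ` defined whether or not the `q`-entries are
reduced, so the reductions in `σ` can be ignored when orbits are counted. Cut along circles 1 and 2:
circle 0 separates the copies of these circles on which arcs of colour 2 end from those on which
arcs of colour 3 end. Up to reduction, `σ` replaces circle 0 by the curve that separates the four
copies the other way. This is an involution that keeps the number of orbits, hence admissibility,
and changes `ν` by `h₁ - c`, where `c = min h₀ q₀ + min h₂ q₀ - q₀` is the new value of `h₁`.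

Suppose that `ν` is maximal at `f` in its orbit, and sort the entries so that `h₀ ≤ h₁ ≤ h₂`. Then
`σ ∘ ψ₁` does not increase `ν`, which forces `q₁ = 0`; hence `q₀ ≠ 0`, and as `σ` does not increase
`ν` either, `h₀ = h₁` and `h₀ < q₀ < h₂`. Now `σ` followed by interchanging `q₀` and `q₂` keeps the
shape `(r,r,s;a,0,b)` and the maximality of `ν`, and sends `(a,b)` to `(2a + b, -a)` mod `r + s`.
Its iterates yield `a + k(a + b)`, and starting from `(b,a)` they yield `b + k(a + b)`: these stay
strictly between `r` and `s`, so `f` is a trap.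
-/

lemma forall_zmod_three {P : ZMod 3 → Prop} : (∀ i, P i) ↔ P 0 ∧ P 1 ∧ P 2 :=
  ⟨fun h => ⟨h 0, h 1, h 2⟩, fun ⟨h₀, h₁, h₂⟩ i => by fin_cases i <;> assumption⟩

namespace Tuple

variable {f : Tuple}

lemma twol_pos (hI : CondI f) (i : ZMod 3) : 0 < f.twol i := add_pos (hI _) (hI _)

lemma lt_twol_of_lt_h (hI : CondI f) {i : ZMod 3} {j : ℤ} (hj : j < f.h i) : j < f.twol i :=
  hj.trans (lt_add_of_pos_left _ (hI _))

lemma twol_sub_one_lt_h {i : ZMod 3} {j : ℤ} (hj : f.h i ≤ j) :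
    f.twol i - j - 1 < f.h (i - 1) := by
  unfold twol
  omega

end Tuple

lemma periodic_eq_of_modEq {X : Type*} {a : ℤ → X} {c x y : ℤ} (ha : Function.Periodic a c)
    (h : x ≡ y [ZMOD c]) : a x = a y := by
  obtain ⟨k, hk⟩ := h.dvd
  rw [show y = x + k * c by linarith]
  exact (ha.int_mul k x).symm

/-! ### The space of `{2,3}`-residues -/

/-- A labelling of the unreduced vertices `ℤ₃ × ℤ` that is constant on the orbits of `⟨ι₂, ι₃⟩`.
The arcs of colour 2 are those with `s = 0`, the arcs of colour 3 those with `s = q`; the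
`q`-entries need not be reduced. -/
structure Labelling (f : Tuple) {X : Type*} (a : ZMod 3 → ℤ → X) : Prop where
  periodic (i : ZMod 3) : Function.Periodic (a i) (f.twol i)
  arc {s : ZMod 3 → ℤ} (hs : s = 0 ∨ s = f.q) (i : ZMod 3) {j : ℤ} (hj₀ : 0 ≤ j)
    (hj : j < f.h i) : a i (j + s i) = a (i + 1) (-j - 1 + s (i + 1))

/-- The relation whose quotient carries the universal labelling. -/
inductive Link (f : Tuple) : ZMod 3 × ℤ → ZMod 3 × ℤ → Prop
  | period (i : ZMod 3) (j : ℤ) : Link f (i, j + f.twol i) (i, j)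
  | arc {s : ZMod 3 → ℤ} (hs : s = 0 ∨ s = f.q) (i : ZMod 3) {j : ℤ} (hj₀ : 0 ≤ j)
      (hj : j < f.h i) : Link f (i, j + s i) (i + 1, -j - 1 + s (i + 1))

/-- The set of orbits of `⟨ι₂, ι₃⟩` on `V(f)`, which makes sense for unreduced `q`-entries. -/
def Orbit (f : Tuple) : Type := Quot (Link f)

namespace Orbit

variable {f : Tuple} {X : Type*}

/-- The orbit of the unreduced vertex `(i, j)`. -/
def mk (f : Tuple) (i : ZMod 3) (j : ℤ) : Orbit f := Quot.mk _ (i, j)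

lemma labelling_mk (f : Tuple) : Labelling f (mk f) where
  periodic i j := Quot.sound (.period i j)
  arc hs i _ hj₀ hj := Quot.sound (.arc hs i hj₀ hj)

/-- The function on orbits induced by a labelling. -/
def lift {a : ZMod 3 → ℤ → X} (ha : Labelling f a) : Orbit f → X :=
  Quot.lift (fun p => a p.1 p.2) fun
    | _, _, .period i j => ha.periodic i j
    | _, _, .arc hs i hj₀ hj => ha.arc hs i hj₀ hj

lemma exists_mk_eq (o : Orbit f) : ∃ i j, mk f i j = o :=
  Quot.inductionOn o fun p => ⟨p.1, p.2, rfl⟩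

lemma mk_emod (f : Tuple) (i : ZMod 3) (j : ℤ) : mk f i (j % f.twol i) = mk f i j :=
  periodic_eq_of_modEq ((labelling_mk f).periodic i) (Int.mod_modEq _ _)

lemma mk_emod_add (f : Tuple) (i : ZMod 3) (j k : ℤ) :
    mk f i (j % f.twol i + k) = mk f i (j + k) :=
  periodic_eq_of_modEq ((labelling_mk f).periodic i) ((Int.mod_modEq _ _).add_right k)

lemma emod_mem_vtx (hI : CondI f) (i : ZMod 3) (j : ℤ) : (i, j % f.twol i) ∈ Vtx f :=
  ⟨Int.emod_nonneg _ (f.twol_pos hI i).ne', Int.emod_lt_of_pos _ (f.twol_pos hI i)⟩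

lemma exists_mem_vtx_mk_eq (hI : CondI f) (o : Orbit f) : ∃ p ∈ Vtx f, mk f p.1 p.2 = o := by
  obtain ⟨i, j, rfl⟩ := exists_mk_eq o
  exact ⟨_, emod_mem_vtx hI i j, mk_emod f i j⟩

lemma mk_iota2_add {s : ZMod 3 → ℤ} (hs : s = 0 ∨ s = f.q) {p : ZMod 3 × ℤ} (hp : p ∈ Vtx f) :
    mk f (iota2 f p).1 ((iota2 f p).2 + s (iota2 f p).1) = mk f p.1 (p.2 + s p.1) := by
  obtain ⟨i, j⟩ := p
  obtain ⟨hj₀, hj⟩ := hp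
  by_cases h : j < f.h i
  · simp only [iota2, h, if_true, mk_emod_add]
    exact ((labelling_mk f).arc hs i hj₀ h).symm
  · simp only [iota2, h, if_false, mk_emod_add]
    have hj' : 0 ≤ f.twol i - j - 1 := by linarith [Int.add_one_le_of_lt hj]
    rw [(labelling_mk f).arc hs (i - 1) hj' (Tuple.twol_sub_one_lt_h (not_lt.1 h)), sub_add_cancel,
      ← (labelling_mk f).periodic i]
    congr 1
    ring

lemma mk_iota (hI : CondI f) {c : Fin 4} (hc : c ∈ ({2, 3} : Set (Fin 4))) {p : ZMod 3 × ℤ}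
    (hp : p ∈ Vtx f) : mk f (iota f c p).1 (iota f c p).2 = mk f p.1 p.2 := by
  obtain rfl | rfl := hc
  · simpa using! mk_iota2_add (.inl rfl) hp
  · have key := mk_iota2_add (.inr rfl) (emod_mem_vtx hI p.1 (p.2 - f.q p.1))
    simpa only [iota, iota3, rho, rhoInv, Function.comp, mk_emod, mk_emod_add, sub_add_cancel]
      using key

lemma orbRel_emod_of_link (hI : CondI f) {p p' : ZMod 3 × ℤ} (h : Link f p p') :
    OrbRel f {2, 3} (p.1, p.2 % f.twol p.1) (p'.1, p'.2 % f.twol p'.1) := by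
  obtain ⟨i, j⟩ | @⟨s, hs, i, j, hj₀, hj⟩ := h
  · simp only [Int.add_emod_right]
    exact .refl _
  have hmod : j % f.twol i = j := Int.emod_eq_of_lt hj₀ (Tuple.lt_twol_of_lt_h hI hj)
  obtain rfl | rfl := hs
  · refine .rel _ _ ⟨emod_mem_vtx hI _ _, emod_mem_vtx hI _ _, 2, by simp, ?_⟩
    simp [iota, iota2, hmod, hj]
  · refine .rel _ _ ⟨emod_mem_vtx hI _ _, emod_mem_vtx hI _ _, 3, by simp, ?_⟩
    simp [iota, iota3, rho, rhoInv, iota2, hmod, hj]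

lemma orbRel_iff_mk_eq (hI : CondI f) {p p' : ZMod 3 × ℤ} (hp : p ∈ Vtx f) (hp' : p' ∈ Vtx f) :
    OrbRel f {2, 3} p p' ↔ mk f p.1 p.2 = mk f p'.1 p'.2 := by
  constructor
  · refine congrArg (Quot.lift (fun v : ZMod 3 × ℤ => mk f v.1 v.2) ?_) ∘ Quot.eqvGen_sound
    rintro v _ ⟨hv, -, c, hc, rfl⟩
    exact (mk_iota hI hc hv).symm
  · intro h
    let residue (v : ZMod 3 × ℤ) : Quot (Step f {2, 3}) := Quot.mk _ (v.1, v.2 % f.twol v.1)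
    have key : residue p = residue p' := congrArg (Quot.lift residue fun v w hvw =>
      Quot.eqvGen_sound (orbRel_emod_of_link hI hvw)) h
    simpa only [residue, Int.emod_eq_of_lt hp.1 hp.2, Int.emod_eq_of_lt hp'.1 hp'.2]
      using! Quot.eqvGen_exact key

end Orbit

/-- The number of orbits of `⟨ι₂, ι₃⟩`. -/
noncomputable def numOrbits (f : Tuple) : Cardinal := Cardinal.mk (Orbit f)

lemma cardinal_mk_eq_three_iff {X : Type*} : Cardinal.mk X = 3 ↔
    ∃ a b c : X, a ≠ b ∧ a ≠ c ∧ b ≠ c ∧ ∀ x, a = x ∨ b = x ∨ c = x := by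
  have h : Cardinal.mk X = 3 ↔ (Set.univ : Set X).ncard = 3 := by
    rw [Set.ncard_univ, Nat.card, Cardinal.toNat_eq_iff three_ne_zero, Nat.cast_ofNat]
  rw [h, Set.ncard_eq_three]
  simp only [Set.ext_iff, Set.mem_univ, Set.mem_insert_iff, Set.mem_singleton_iff, true_iff,
    eq_comm]

lemma threeOrbits_iff {f : Tuple} (hI : CondI f) : ThreeOrbits f {2, 3} ↔ numOrbits f = 3 := by
  rw [numOrbits, cardinal_mk_eq_three_iff]
  constructor
  · rintro ⟨a, b, c, ha, hb, hc, hab, hac, hbc, hall⟩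
    rw [Orbit.orbRel_iff_mk_eq hI ha hb] at hab
    rw [Orbit.orbRel_iff_mk_eq hI ha hc] at hac
    rw [Orbit.orbRel_iff_mk_eq hI hb hc] at hbc
    refine ⟨_, _, _, hab, hac, hbc, fun o => ?_⟩
    obtain ⟨v, hv, rfl⟩ := Orbit.exists_mem_vtx_mk_eq hI o
    simpa only [Orbit.orbRel_iff_mk_eq hI, ha, hb, hc, hv] using hall v hv
  · rintro ⟨a, b, c, hab, hac, hbc, hall⟩
    obtain ⟨a, ha, rfl⟩ := Orbit.exists_mem_vtx_mk_eq hI a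
    obtain ⟨b, hb, rfl⟩ := Orbit.exists_mem_vtx_mk_eq hI b
    obtain ⟨c, hc, rfl⟩ := Orbit.exists_mem_vtx_mk_eq hI c
    refine ⟨a, b, c, ha, hb, hc, ?_, ?_, ?_, fun v hv => ?_⟩
    · rwa [Orbit.orbRel_iff_mk_eq hI ha hb]
    · rwa [Orbit.orbRel_iff_mk_eq hI ha hc]
    · rwa [Orbit.orbRel_iff_mk_eq hI hb hc]
    · simpa only [Orbit.orbRel_iff_mk_eq hI, ha, hb, hc, hv] using hall (Orbit.mk f v.1 v.2)

lemma numOrbits_le {f g : Tuple} {a : ZMod 3 → ℤ → Orbit g} (ha : Labelling f a)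
    (hsurj : ∀ i j, ∃ i' j', a i' j' = Orbit.mk g i j) : numOrbits g ≤ numOrbits f := by
  refine Cardinal.mk_le_of_surjective (f := Orbit.lift ha) fun o => ?_
  obtain ⟨i, j, rfl⟩ := Orbit.exists_mk_eq o
  obtain ⟨i', j', h⟩ := hsurj i j
  exact ⟨Orbit.mk f i' j', h⟩

/-! ### Symmetries of the tuple -/

lemma psi1_h (f : Tuple) : ∀ i, (psi1 f).h i = f.h (i + 1) :=
  forall_zmod_three.2 ⟨rfl, rfl, rfl⟩

lemma psi1_q (f : Tuple) : ∀ i, (psi1 f).q i = f.q (i + 1) :=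
  forall_zmod_three.2 ⟨rfl, rfl, rfl⟩

lemma psi1_twol (f : Tuple) : ∀ i, (psi1 f).twol i = f.twol (i + 1) :=
  forall_zmod_three.2 ⟨rfl, rfl, rfl⟩

lemma psi2_h (f : Tuple) : ∀ i, (psi2 f).h i = f.h (-(i + 1)) :=
  forall_zmod_three.2 ⟨rfl, rfl, rfl⟩

lemma psi2_q (f : Tuple) : ∀ i, (psi2 f).q i = f.q (-i) :=
  forall_zmod_three.2 ⟨rfl, rfl, rfl⟩

lemma psi2_twol (f : Tuple) : ∀ i, (psi2 f).twol i = f.twol (-i) :=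
  forall_zmod_three.2 ⟨add_comm _ _, add_comm _ _, add_comm _ _⟩

/-- Reduction of the `q`-entries to their least nonnegative residues. -/
def reduce (f : Tuple) : Tuple :=
  ⟨f.h0, f.h1, f.h2, f.q0 % (f.h2 + f.h0), f.q1 % (f.h0 + f.h1), f.q2 % (f.h1 + f.h2)⟩

lemma reduce_q (f : Tuple) : ∀ i, (reduce f).q i = f.q i % f.twol i :=
  forall_zmod_three.2 ⟨rfl, rfl, rfl⟩

section Invariance

variable {f g : Tuple}

lemma numOrbits_psi1_le (f : Tuple) : numOrbits (psi1 f) ≤ numOrbits f := by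
  have label := Orbit.labelling_mk (psi1 f)
  refine numOrbits_le (a := fun i => Orbit.mk (psi1 f) (i - 1))
    ⟨fun i => ?_, fun {s} hs i j hj₀ hj => ?_⟩ fun i j => ⟨i + 1, j, by rw [add_sub_cancel_right]⟩
  · simpa only [psi1_twol, sub_add_cancel] using label.periodic (i - 1)
  · have hs' : (fun k => s (k + 1)) = 0 ∨ (fun k => s (k + 1)) = (psi1 f).q := by
      obtain rfl | rfl := hs
      exacts [.inl rfl, .inr (funext fun k => (psi1_q f k).symm)]
    have key := label.arc hs' (i - 1) hj₀ (by rwa [psi1_h, sub_add_cancel])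
    simpa only [sub_add_cancel, add_sub_cancel_right] using key

lemma numOrbits_psi1 (f : Tuple) : numOrbits (psi1 f) = numOrbits f :=
  (numOrbits_psi1_le f).antisymm <|
    (numOrbits_psi1_le (psi1 (psi1 f))).trans (numOrbits_psi1_le (psi1 f))

lemma numOrbits_psi2_le (f : Tuple) : numOrbits (psi2 f) ≤ numOrbits f := by
  have label := Orbit.labelling_mk (psi2 f)
  refine numOrbits_le (a := fun i j => Orbit.mk (psi2 f) (-i) (-j - 1 + f.q i))
    ⟨fun i j => ?_, fun {s} hs i j hj₀ hj => ?_⟩ fun i j => ⟨-i, -j - 1 + f.q (-i), ?_⟩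
  · rw [← label.periodic, psi2_twol]
    congr 1
    rw [neg_neg]
    ring
  · have hs' : (fun k => f.q (-k) - s (-k)) = 0 ∨ (fun k => f.q (-k) - s (-k)) = (psi2 f).q := by
      obtain rfl | rfl := hs
      · exact .inr (funext fun k => by simp [psi2_q])
      · exact .inl (funext fun k => by simp)
    have key := label.arc hs' (-(i + 1)) hj₀ (by simpa [psi2_h] using hj)
    have hi : -(i + 1) + 1 = -i := by ring
    simp only [hi, neg_neg] at key
    convert key.symm using 2 <;> ring
  · rw [neg_neg]
    congr 1
    ring

lemma numOrbits_psi2 (f : Tuple) : numOrbits (psi2 f) = numOrbits f :=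
  (numOrbits_psi2_le f).antisymm (numOrbits_psi2_le (psi2 f))

lemma numOrbits_le_of_modEq (hh : g.h = f.h) (hq : ∀ i, f.q i ≡ g.q i [ZMOD g.twol i]) :
    numOrbits g ≤ numOrbits f := by
  have label := Orbit.labelling_mk g
  refine numOrbits_le (a := Orbit.mk g) ⟨fun i => ?_, fun {s} hs i j hj₀ hj => ?_⟩
    fun i j => ⟨i, j, rfl⟩
  · simpa only [Tuple.twol, hh] using label.periodic i
  · rw [← hh] at hj
    obtain rfl | rfl := hs
    · exact label.arc (.inl rfl) i hj₀ hj
    · rw [periodic_eq_of_modEq (label.periodic i) ((hq i).add_left j),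
        periodic_eq_of_modEq (label.periodic (i + 1)) ((hq (i + 1)).add_left (-j - 1))]
      exact label.arc (.inr rfl) i hj₀ hj

lemma numOrbits_reduce (f : Tuple) : numOrbits (reduce f) = numOrbits f := by
  apply le_antisymm <;> refine numOrbits_le_of_modEq rfl fun i => ?_ <;> rw [reduce_q]
  · exact (Int.mod_modEq _ _).symm
  · exact Int.mod_modEq _ _

end Invariance

/-! ### Recutting along another curve -/

/-- The number of passages from circle 1 through circle 0 to circle 2 along an arc of colour 2
followed by an arc of colour 3, when `0 ≤ q₀ ≤ h₂ + h₀`. -/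
def crossing (f : Tuple) : ℤ := min f.h0 f.q0 + min f.h2 f.q0 - f.q0

/-- The exchange of circle 0 for the curve that separates the other way the two copies of circle 1
and the two copies of circle 2 on the boundary of the surface cut along circles 1 and 2. Up to
reduction of the `q`-entries, this is `σ`. -/
def recut (f : Tuple) : Tuple where
  h0 := f.h0 + f.h1 - crossing f
  h1 := crossing f
  h2 := f.h1 + f.h2 - crossing f
  q0 := f.h0 + f.h1 + f.h2 - crossing f - f.q0
  q1 := f.q1 + (min f.h0 f.q0 - f.h0) + (f.q0 - min f.h2 f.q0)
  q2 := f.q2 + (min f.h2 f.q0 - f.h2) + (f.q0 - min f.h0 f.q0)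

lemma recut_recut (f : Tuple) : recut (recut f) = f := by
  obtain ⟨h0, h1, h2, q0, q1, q2⟩ := f
  simp only [recut, crossing, Tuple.mk.injEq]
  omega

lemma nu_recut (f : Tuple) : nu (recut f) = nu f + f.h1 - crossing f := by
  simp only [nu, recut]
  ring

section Recut

variable {f : Tuple} {X : Type*}

lemma condI_iff : CondI f ↔ 0 < f.h0 ∧ 0 < f.h1 ∧ 0 < f.h2 := forall_zmod_three

lemma condI_recut (hI : CondI f) (hq : f.q0 ∈ Set.Ioo 0 (f.h2 + f.h0)) : CondI (recut f) := by
  rw [condI_iff] at hI ⊢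
  rw [Set.mem_Ioo] at hq
  simp only [recut, crossing]
  omega

lemma recut_q0_mem_Ioo (hI : CondI f) :
    (recut f).q0 ∈ Set.Ioo 0 ((recut f).h2 + (recut f).h0) := by
  rw [condI_iff] at hI
  simp only [recut, crossing, Set.mem_Ioo]
  omega

/-- The label at the other end of the arc that leaves circle 0 at position `k`, when circles 1 and 2
carry the labels `a₁` and `a₂`, and the arcs are shifted there by `s₁` and `s₂`. -/
def endLabel (a₁ a₂ : ℤ → X) (s₁ s₂ k : ℤ) : X :=
  if 0 ≤ k then a₁ (-k - 1 + s₁) else a₂ (-k - 1 + s₂)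

lemma endLabel_of_nonneg {a₁ a₂ : ℤ → X} {s₁ s₂ k : ℤ} (hk : 0 ≤ k) :
    endLabel a₁ a₂ s₁ s₂ k = a₁ (-k - 1 + s₁) := if_pos hk

lemma endLabel_of_neg {a₁ a₂ : ℤ → X} {s₁ s₂ k : ℤ} (hk : k < 0) :
    endLabel a₁ a₂ s₁ s₂ k = a₂ (-k - 1 + s₂) := if_neg hk.not_ge

/-- The restriction of a labelling to circles 1 and 2; in `cross`, an arc of colour 2 that leaves
circle 0 at position `k` meets there an arc of colour 3 that leaves it at position `l + q₀`. -/
structure CircleLabelling (f : Tuple) (a₁ a₂ : ℤ → X) : Prop where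
  periodic₁ : Function.Periodic a₁ (f.h0 + f.h1)
  periodic₂ : Function.Periodic a₂ (f.h1 + f.h2)
  arc₂ {j : ℤ} (hj₀ : 0 ≤ j) (hj : j < f.h1) : a₁ j = a₂ (-j - 1)
  arc₃ {j : ℤ} (hj₀ : 0 ≤ j) (hj : j < f.h1) : a₁ (j + f.q1) = a₂ (-j - 1 + f.q2)
  cross {k l : ℤ} (hk : k ∈ Set.Ico (-f.h2) f.h0) (hl : l ∈ Set.Ico (-f.h2) f.h0)
    (hkl : k = l + f.q0 ∨ k = l + f.q0 - (f.h2 + f.h0)) :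
    endLabel a₁ a₂ 0 0 k = endLabel a₁ a₂ f.q1 f.q2 l

lemma Labelling.eq_endLabel {a : ZMod 3 → ℤ → X} (ha : Labelling f a) {s : ZMod 3 → ℤ}
    (hs : s = 0 ∨ s = f.q) {k : ℤ} (hk : k ∈ Set.Ico (-f.h2) f.h0) :
    a 0 (k + s 0) = endLabel (a 1) (a 2) (s 1) (s 2) k := by
  obtain ⟨hk₀, hk⟩ := hk
  rcases le_or_gt 0 k with h | h
  · rw [endLabel_of_nonneg h]
    exact ha.arc hs 0 h hk
  · rw [endLabel_of_neg h]
    have key := ha.arc hs 2 (j := -k - 1) (by linarith) (show -k - 1 < f.h2 by linarith)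
    rw [key]
    congr 1
    change k + s 0 = -(-k - 1) - 1 + s 0
    ring

lemma Labelling.circleLabelling {a : ZMod 3 → ℤ → X} (ha : Labelling f a) :
    CircleLabelling f (a 1) (a 2) where
  periodic₁ := ha.periodic 1
  periodic₂ := ha.periodic 2
  arc₂ hj₀ hj := by simpa using! ha.arc (.inl rfl) 1 hj₀ hj
  arc₃ hj₀ hj := ha.arc (.inr rfl) 1 hj₀ hj
  cross {k l} hk hl hkl := by
    have key : a 0 (k + 0) = a 0 (l + f.q 0) := by
      obtain rfl | rfl := hkl
      · rw [add_zero]; rfl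
      · rw [add_zero]
        exact (ha.periodic 0).sub_eq _
    exact (ha.eq_endLabel (.inl rfl) hk).symm.trans (key.trans (ha.eq_endLabel (.inr rfl) hl))

/-- The labelling of circle 0 forced by the labels of circles 1 and 2. -/
def zeroLabel (f : Tuple) (a₁ a₂ : ℤ → X) (j : ℤ) : X :=
  endLabel a₁ a₂ 0 0 ((j + f.h2) % (f.h2 + f.h0) - f.h2)

lemma zeroLabel_eq_endLabel {a₁ a₂ : ℤ → X} {j k : ℤ} (hk : k ∈ Set.Ico (-f.h2) f.h0)
    (hjk : j = k ∨ j = k + (f.h2 + f.h0)) : zeroLabel f a₁ a₂ j = endLabel a₁ a₂ 0 0 k := by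
  obtain ⟨hk₀, hk⟩ := hk
  have hmod : (j + f.h2) % (f.h2 + f.h0) = k + f.h2 := by
    rw [← Int.emod_eq_of_lt (a := k + f.h2) (b := f.h2 + f.h0) (by linarith) (by linarith)]
    obtain rfl | rfl := hjk
    · rfl
    · rw [add_right_comm, Int.add_emod_right]
  rw [zeroLabel, hmod, add_sub_cancel_right]

namespace CircleLabelling

variable {a₁ a₂ : ℤ → X}

lemma zeroLabel_add (ha : CircleLabelling f a₁ a₂) (hq : f.q0 ∈ Set.Ico 0 (f.h2 + f.h0))
    {s : ZMod 3 → ℤ} (hs : s = 0 ∨ s = f.q) {l : ℤ} (hl : l ∈ Set.Ico (-f.h2) f.h0) :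
    zeroLabel f a₁ a₂ (l + s 0) = endLabel a₁ a₂ (s 1) (s 2) l := by
  obtain rfl | rfl := hs
  · exact zeroLabel_eq_endLabel hl (.inl (add_zero l))
  obtain ⟨k, hk, hkl⟩ : ∃ k ∈ Set.Ico (-f.h2) f.h0,
      k = l + f.q0 ∨ k = l + f.q0 - (f.h2 + f.h0) := by
    simp only [Set.mem_Ico] at hq hl ⊢
    by_cases h : l + f.q0 < f.h0
    · exact ⟨l + f.q0, by omega, .inl rfl⟩
    · exact ⟨l + f.q0 - (f.h2 + f.h0), by omega, .inr rfl⟩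
  have hlk : l + f.q0 = k ∨ l + f.q0 = k + (f.h2 + f.h0) := by omega
  exact (zeroLabel_eq_endLabel hk hlk).trans (ha.cross hk hl hkl)

lemma labelling (ha : CircleLabelling f a₁ a₂) (hI : CondI f)
    (hq : f.q0 ∈ Set.Ico 0 (f.h2 + f.h0)) : Labelling f ![zeroLabel f a₁ a₂, a₁, a₂] where
  periodic := forall_zmod_three.2 ⟨fun j => by
    change zeroLabel f a₁ a₂ (j + (f.h2 + f.h0)) = zeroLabel f a₁ a₂ j
    rw [zeroLabel, zeroLabel, add_right_comm, Int.add_emod_right], ha.periodic₁, ha.periodic₂⟩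
  arc {s} hs := by
    obtain ⟨hI₀, -, hI₂⟩ := condI_iff.1 hI
    refine forall_zmod_three.2 ⟨fun {j} hj₀ hj => ?_, fun {j} hj₀ hj => ?_, fun {j} hj₀ hj => ?_⟩
    · exact (ha.zeroLabel_add hq hs ⟨by linarith, hj⟩).trans (endLabel_of_nonneg hj₀)
    · obtain rfl | rfl := hs
      · exact (congrArg a₁ (add_zero j)).trans <|
          (ha.arc₂ hj₀ hj).trans (congrArg a₂ (add_zero (-j - 1)).symm)
      · exact ha.arc₃ hj₀ hj
    · replace hj : j < f.h2 := hj
      have key := ha.zeroLabel_add hq hs (l := -j - 1) ⟨by linarith, by linarith⟩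
      rw [endLabel_of_neg (by linarith)] at key
      exact (congrArg a₂ (by ring)).trans key.symm

lemma periodic₁_of_recut (ha : CircleLabelling (recut f) a₁ a₂) (j : ℤ) :
    a₁ (j + (f.h0 + f.h1)) = a₁ j := by
  simpa only [recut, sub_add_cancel] using ha.periodic₁ j

lemma periodic₂_of_recut (ha : CircleLabelling (recut f) a₁ a₂) (j : ℤ) :
    a₂ (j + (f.h1 + f.h2)) = a₂ j := by
  simpa only [recut, add_sub_cancel] using ha.periodic₂ j

/-- The labels of circle 1, read off from a circle labelling of the recut tuple. -/
def recutLabel₁ (f : Tuple) (a₁ : ℤ → X) : ℤ → X := fun j => a₁ (j + min f.h0 f.q0)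

/-- The labels of circle 2, read off from a circle labelling of the recut tuple. Recutting
interchanges the copy of circle 2 where arcs of colour 2 end with the one where arcs of colour 3
end; this reverses the direction of the circle. -/
def recutLabel₂ (f : Tuple) (a₂ : ℤ → X) : ℤ → X := fun j =>
  a₂ (f.q0 + f.q2 - min f.h0 f.q0 - 1 - j)

lemma cross_of_recut (ha : CircleLabelling (recut f) a₁ a₂) (hI : CondI f)
    (hq : f.q0 ∈ Set.Ioo 0 (f.h2 + f.h0)) {k l : ℤ} (hk : k ∈ Set.Ico (-f.h2) f.h0)
    (hl : l ∈ Set.Ico (-f.h2) f.h0) (hkl : k = l + f.q0 ∨ k = l + f.q0 - (f.h2 + f.h0)) :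
    endLabel (recutLabel₁ f a₁) (recutLabel₂ f a₂) 0 0 k =
      endLabel (recutLabel₁ f a₁) (recutLabel₂ f a₂) f.q1 f.q2 l := by
  have per₁ := ha.periodic₁_of_recut
  have per₂ := ha.periodic₂_of_recut
  obtain ⟨-, -, arc₂, arc₃, cross⟩ := ha
  rw [condI_iff] at hI
  obtain ⟨h0, h1, h2, q0, q1, q2⟩ := f
  unfold recutLabel₁ recutLabel₂
  simp only [recut, crossing, Set.mem_Ico, Set.mem_Ioo] at *
  -- A passage through circle 0 between circles 1 and 2 is an arc of the recut tuple; one that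
  -- returns to the same circle is a passage through the new curve.
  rcases lt_or_ge k 0 with hk₀ | hk₀ <;> rcases lt_or_ge l 0 with hl₀ | hl₀
  · rw [endLabel_of_neg hk₀, endLabel_of_neg hl₀]
    rcases hkl with hkl | hkl
    · have key := cross (k := min h0 q0 - q0 - 1 - l - h1 - h2) (l := - 1 - l - h2)
        (by omega) (by omega) (by omega)
      rw [endLabel_of_neg (by omega), endLabel_of_neg (by omega)] at key
      rw [eq_comm, ← per₂]
      convert key using 2 <;> omega
    · have key := cross (k := min h0 q0 - q0 - 1 - l)
        (l := min h0 q0 + min h2 q0 - q0 - 1 - l - h1 - h2) (by omega) (by omega) (by omega)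
      rw [endLabel_of_neg (by omega), endLabel_of_neg (by omega)] at key
      rw [← per₂]
      convert key.symm using 2 <;> omega
  · rw [endLabel_of_neg hk₀, endLabel_of_nonneg hl₀]
    have key := arc₃ (j := min h2 q0 - h2 - 1 - k) (by omega) (by omega)
    convert key.symm using 2 <;> omega
  · rw [endLabel_of_nonneg hk₀, endLabel_of_neg hl₀]
    have key := arc₂ (j := min h0 q0 - 1 - k) (by omega) (by omega)
    convert key using 2 <;> omega
  · rw [endLabel_of_nonneg hk₀, endLabel_of_nonneg hl₀]
    rcases hkl with hkl | hkl
    · have key := cross (k := l) (l := l + h1 - (min h0 q0 + min h2 q0 - q0) + q0)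
        (by omega) (by omega) (by omega)
      rw [endLabel_of_nonneg (by omega), endLabel_of_nonneg (by omega), eq_comm, ← per₁] at key
      convert key.symm using 2 <;> omega
    · have key := cross (k := k + h0 + h1 - min h0 q0) (l := k) (by omega) (by omega) (by omega)
      rw [endLabel_of_nonneg (by omega), endLabel_of_nonneg (by omega), ← per₁] at key
      convert key using 2 <;> omega

lemma of_recut (ha : CircleLabelling (recut f) a₁ a₂) (hI : CondI f)
    (hq : f.q0 ∈ Set.Ioo 0 (f.h2 + f.h0)) :
    CircleLabelling f (recutLabel₁ f a₁) (recutLabel₂ f a₂) := by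
  refine ⟨fun j => ?_, fun j => ?_, fun {j} hj₀ hj => ?_, fun {j} hj₀ hj => ?_,
    ha.cross_of_recut hI hq⟩
  · exact (congrArg a₁ (add_right_comm _ _ _)).trans (ha.periodic₁_of_recut _)
  · exact (ha.periodic₂_of_recut _).symm.trans (congrArg a₂ (by ring))
  all_goals
    have per₁ := ha.periodic₁_of_recut
    obtain ⟨-, -, -, -, cross⟩ := ha
    rw [condI_iff] at hI
    obtain ⟨h0, h1, h2, q0, q1, q2⟩ := f
    unfold recutLabel₁ recutLabel₂
    simp only [recut, crossing, Set.mem_Ico, Set.mem_Ioo] at *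
  · have key := cross (k := h0 + h1 - min h0 q0 - 1 - j) (l := min h2 q0 - h2 - 1 - j)
      (by omega) (by omega) (by omega)
    rw [endLabel_of_nonneg (by omega), endLabel_of_neg (by omega), ← per₁] at key
    convert key using 2 <;> omega
  · have key := cross (k := -1 - q0 + min h0 q0 - j) (l := h1 + q0 - min h2 q0 - 1 - j)
      (by omega) (by omega) (by omega)
    rw [endLabel_of_neg (by omega), endLabel_of_nonneg (by omega), ← per₁] at key
    convert key.symm using 2 <;> omega

end CircleLabelling

lemma Orbit.exists_mk_one_eq_or_mk_two_eq (hI : CondI f) (o : Orbit f) :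
    ∃ j, Orbit.mk f 1 j = o ∨ Orbit.mk f 2 j = o := by
  obtain ⟨i, j, rfl⟩ := o.exists_mk_eq
  revert i
  refine forall_zmod_three.2 ⟨?_, ⟨j, .inl rfl⟩, ⟨j, .inr rfl⟩⟩
  obtain ⟨hj₀, hj⟩ : 0 ≤ (j + f.h2) % f.twol 0 ∧ (j + f.h2) % f.twol 0 < f.h2 + f.h0 :=
    Orbit.emod_mem_vtx hI 0 (j + f.h2)
  have hmod : Orbit.mk f 0 ((j + f.h2) % f.twol 0 - f.h2) = Orbit.mk f 0 j := by
    rw [sub_eq_add_neg, Orbit.mk_emod_add, add_neg_cancel_right]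
  have key := (Orbit.labelling_mk f).eq_endLabel (.inl rfl)
    (k := (j + f.h2) % f.twol 0 - f.h2) ⟨by linarith, by linarith⟩
  rw [Pi.zero_apply, add_zero, hmod] at key
  rw [key, endLabel]
  split_ifs
  exacts [⟨_, .inl rfl⟩, ⟨_, .inr rfl⟩]

lemma numOrbits_recut_le (hI : CondI f) (hq : f.q0 ∈ Set.Ioo 0 (f.h2 + f.h0)) :
    numOrbits (recut f) ≤ numOrbits f := by
  have circle := (Orbit.labelling_mk (recut f)).circleLabelling.of_recut hI hq
  refine numOrbits_le (circle.labelling hI (Set.Ioo_subset_Ico_self hq)) fun i j => ?_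
  obtain ⟨k, hk | hk⟩ :=
    Orbit.exists_mk_one_eq_or_mk_two_eq (condI_recut hI hq) (Orbit.mk (recut f) i j)
  · refine ⟨1, k - min f.h0 f.q0, .trans (congrArg (Orbit.mk (recut f) 1) ?_) hk⟩
    ring
  · refine ⟨2, f.q0 + f.q2 - min f.h0 f.q0 - 1 - k, .trans (congrArg (Orbit.mk (recut f) 2) ?_) hk⟩
    ring

lemma numOrbits_recut (hI : CondI f) (hq : f.q0 ∈ Set.Ioo 0 (f.h2 + f.h0)) :
    numOrbits (recut f) = numOrbits f := by
  refine (numOrbits_recut_le hI hq).antisymm ?_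
  simpa only [recut_recut] using
    numOrbits_recut_le (condI_recut hI hq) (recut_q0_mem_Ioo hI)

end Recut

/-! ### Admissibility -/

/-- Admissibility without the normalisation (III) of the `q`-entries. Conditions (II), (IV) and (V)
together say that every `h`-entry has the parity opposite to that of every `q`-entry. -/
structure WeaklyAdmissible (f : Tuple) : Prop where
  condI : CondI f
  odd (i j : ZMod 3) : Odd (f.h i + f.q j)
  numOrbits_eq : numOrbits f = 3

lemma admissible_iff {f : Tuple} : Admissible f ↔ WeaklyAdmissible f ∧ CondIII f := by
  constructor
  · rintro ⟨⟨hI, hII, hIII, -⟩, hV, hVI⟩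
    refine ⟨⟨hI, fun i j => Int.odd_iff.2 ?_, (threeOrbits_iff hI).1 hVI⟩, hIII⟩
    have := hII i j
    have := hV j
    omega
  · rintro ⟨⟨hI, hodd, hVI⟩, hIII⟩
    simp only [Int.odd_iff] at hodd
    refine ⟨⟨hI, fun i j => ?_, hIII, fun i j => ?_⟩, fun i => hodd i i, (threeOrbits_iff hI).2 hVI⟩
    · have := hodd i 0
      have := hodd j 0
      omega
    · have := hodd 0 i
      have := hodd 0 j
      omega

lemma forall_odd_h_add_q_iff {f : Tuple} : (∀ i j, Odd (f.h i + f.q j)) ↔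
    (Odd (f.h0 + f.q0) ∧ Odd (f.h0 + f.q1) ∧ Odd (f.h0 + f.q2)) ∧
    (Odd (f.h1 + f.q0) ∧ Odd (f.h1 + f.q1) ∧ Odd (f.h1 + f.q2)) ∧
    (Odd (f.h2 + f.q0) ∧ Odd (f.h2 + f.q1) ∧ Odd (f.h2 + f.q2)) := by
  simp only [forall_zmod_three]
  rfl

namespace WeaklyAdmissible

variable {f : Tuple}

lemma even_twol (hf : WeaklyAdmissible f) (i : ZMod 3) : 2 ∣ f.twol i := by
  have h := Int.odd_iff.1 (hf.odd i 0)
  have h' := Int.odd_iff.1 (hf.odd (i - 1) 0)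
  unfold Tuple.twol
  omega

lemma admissible_reduce (hf : WeaklyAdmissible f) : Admissible (reduce f) := by
  refine admissible_iff.2 ⟨⟨hf.condI, fun i j => ?_, numOrbits_reduce f ▸ hf.numOrbits_eq⟩,
    fun i => ?_⟩
  · have hmod := Int.emod_emod_of_dvd (f.q j) (hf.even_twol j)
    have hodd := hf.odd i j
    rw [reduce_q]
    change Odd (f.h i + _)
    rw [Int.odd_iff] at hodd ⊢
    omega
  · rw [reduce_q]
    exact Orbit.emod_mem_vtx hf.condI i (f.q i)

lemma psi1 (hf : WeaklyAdmissible f) : WeaklyAdmissible (psi1 f) where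
  condI i := psi1_h f i ▸ hf.condI _
  odd i j := psi1_h f i ▸ psi1_q f j ▸ hf.odd _ _
  numOrbits_eq := numOrbits_psi1 f ▸ hf.numOrbits_eq

lemma psi2 (hf : WeaklyAdmissible f) : WeaklyAdmissible (psi2 f) where
  condI i := psi2_h f i ▸ hf.condI _
  odd i j := psi2_h f i ▸ psi2_q f j ▸ hf.odd _ _
  numOrbits_eq := numOrbits_psi2 f ▸ hf.numOrbits_eq

lemma recut (hf : WeaklyAdmissible f) (hq : f.q0 ∈ Set.Ioo 0 (f.h2 + f.h0)) :
    WeaklyAdmissible (recut f) where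
  condI := condI_recut hf.condI hq
  odd := by
    have hodd := forall_odd_h_add_q_iff.1 hf.odd
    rw [forall_odd_h_add_q_iff]
    simp only [GMN.recut, crossing, Int.odd_iff] at hodd ⊢
    omega
  numOrbits_eq := (numOrbits_recut hf.condI hq).trans hf.numOrbits_eq

end WeaklyAdmissible

lemma reduce_add_mul (f : Tuple) (k₁ k₂ : ℤ) :
    reduce ⟨f.h0, f.h1, f.h2, f.q0, f.q1 + k₁ * (f.h0 + f.h1), f.q2 + k₂ * (f.h1 + f.h2)⟩ =
      reduce f := by
  simp only [reduce, Int.add_mul_emod_self_right]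

namespace Admissible

variable {f : Tuple}

lemma weaklyAdmissible (hf : Admissible f) : WeaklyAdmissible f := (admissible_iff.1 hf).1

lemma q0_mem_Ioo (hf : Admissible f) (hq : f.q0 ≠ 0) : f.q0 ∈ Set.Ioo 0 (f.h2 + f.h0) :=
  ⟨lt_of_le_of_ne (hf.1.2.2.1 0).1 hq.symm, (hf.1.2.2.1 0).2⟩

lemma h_ne_q (hf : Admissible f) (i j : ZMod 3) : f.h i ≠ f.q j := by
  have hodd := Int.odd_iff.1 (hf.weaklyAdmissible.odd i j)
  omega

lemma sigma_eq_reduce_recut (hf : Admissible f) (hq : f.q0 ≠ 0) : sigma f = reduce (recut f) := by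
  have hq₂ : f.h2 ≠ f.q0 := hf.h_ne_q 2 0
  rw [sigma, if_neg hq]
  split_ifs
  on_goal 1 => rw [← reduce_add_mul _ 1 1]
  on_goal 2 => rw [← reduce_add_mul _ 0 0]
  on_goal 3 => rw [← reduce_add_mul _ 0 1]
  on_goal 4 => rw [← reduce_add_mul _ 1 0]
  all_goals
    simp only [reduce, recut, crossing, Tuple.mk.injEq]
    refine ⟨by omega, by omega, by omega, ?_, ?_, ?_⟩ <;> congr 1 <;> omega

lemma psi1 (hf : Admissible f) : Admissible (psi1 f) := by
  rw [admissible_iff] at hf ⊢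
  refine ⟨hf.1.psi1, fun i => ?_⟩
  rw [psi1_q, psi1_twol]
  exact hf.2 _

lemma psi2 (hf : Admissible f) : Admissible (psi2 f) := by
  rw [admissible_iff] at hf ⊢
  refine ⟨hf.1.psi2, fun i => ?_⟩
  rw [psi2_q, psi2_twol]
  exact hf.2 _

lemma sigma (hf : Admissible f) : Admissible (sigma f) := by
  by_cases hq : f.q0 = 0
  · rwa [GMN.sigma, if_pos hq]
  · rw [hf.sigma_eq_reduce_recut hq]
    exact (hf.weaklyAdmissible.recut (hf.q0_mem_Ioo hq)).admissible_reduce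

end Admissible

/-! ### Tuples of maximal complexity -/

section Orbits

variable {f g : Tuple}

lemma Admissible.gEquiv_psi1 (hf : Admissible f) : GEquiv f (GMN.psi1 f) :=
  .rel _ _ ⟨hf, hf.psi1, .inl rfl⟩

lemma Admissible.gEquiv_psi2 (hf : Admissible f) : GEquiv f (GMN.psi2 f) :=
  .rel _ _ ⟨hf, hf.psi2, .inr (.inl rfl)⟩

lemma Admissible.gEquiv_sigma (hf : Admissible f) : GEquiv f (GMN.sigma f) :=
  .rel _ _ ⟨hf, hf.sigma, .inr (.inr (.inr rfl))⟩

lemma GEquiv.admissible_iff (h : GEquiv f g) : Admissible f ↔ Admissible g := by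
  induction h with
  | rel _ _ h => exact iff_of_true h.1 h.2.1
  | refl _ => rfl
  | symm _ _ _ ih => exact ih.symm
  | trans _ _ _ _ _ ih₁ ih₂ => exact ih₁.trans ih₂

lemma sigma_of_mem_Ioo (hq₀ : f.q0 ≠ 0) (hq : f.q0 ∈ Set.Ioo f.h0 f.h2) :
    sigma f = ⟨f.h1, f.h0, f.h1 + f.h2 - f.h0,
      (f.h1 + f.h2 - f.q0) % ((f.h1 + f.h2 - f.h0) + f.h1),
      f.q1 % (f.h1 + f.h0),
      (2 * f.q0 + f.q2 + f.h1 - f.h0) % (f.h0 + (f.h1 + f.h2 - f.h0))⟩ := by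
  have hlt := hq.1.not_gt
  rw [sigma, if_neg hq₀, if_neg fun h => hlt h.1, if_neg fun h => h.2.not_gt hq.2, if_pos hq.2]

lemma nu_sigma (hf : Admissible f) (hq : f.q0 ≠ 0) : nu (sigma f) = nu f + f.h1 - crossing f := by
  rw [hf.sigma_eq_reduce_recut hq, ← nu_recut]
  rfl

lemma exists_sorted {P : Tuple → Prop} (hpsi1 : ∀ g, P g → P (psi1 g))
    (hpsi2 : ∀ g, P g → P (psi2 g)) (hf : P f) : ∃ g, P g ∧ g.h0 ≤ g.h1 ∧ g.h1 ≤ g.h2 := by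
  have of_max (g : Tuple) (hg : P g) (h₀ : g.h0 ≤ g.h2) (h₁ : g.h1 ≤ g.h2) :
      ∃ g, P g ∧ g.h0 ≤ g.h1 ∧ g.h1 ≤ g.h2 := by
    rcases le_total g.h0 g.h1 with h | h
    · exact ⟨g, hg, h, h₁⟩
    · exact ⟨psi1 (psi2 g), hpsi1 _ (hpsi2 _ hg), h, h₀⟩
  rcases le_total f.h0 f.h1 with h₀₁ | h₁₀
  · rcases le_total f.h1 f.h2 with h₁₂ | h₂₁
    · exact of_max f hf (h₀₁.trans h₁₂) h₁₂
    · exact of_max _ (hpsi1 _ (hpsi1 _ hf)) h₂₁ h₀₁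
  · rcases le_total f.h0 f.h2 with h₀₂ | h₂₀
    · exact of_max f hf h₀₂ (h₁₀.trans h₀₂)
    · exact of_max _ (hpsi1 _ hf) h₁₀ h₂₀

end Orbits

/-- An admissible tuple of maximal complexity in its `G`-orbit, where no tuple of the orbit has two
vanishing `q`-entries. -/
structure IsPeak (f : Tuple) : Prop where
  admissible : Admissible f
  nu_le {g : Tuple} (hg : GEquiv f g) : nu g ≤ nu f
  not_two_zero {g : Tuple} (hg : GEquiv f g) :
    ¬ ((g.q0 = 0 ∧ g.q1 = 0) ∨ (g.q0 = 0 ∧ g.q2 = 0) ∨ (g.q1 = 0 ∧ g.q2 = 0))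

/-- The tuple `(r,r,s;a,0,b)` with `a` and `b` reduced mod `r + s`. -/
def trapShape (r s a b : ℤ) : Tuple := ⟨r, r, s, a % (r + s), 0, b % (r + s)⟩

namespace IsPeak

variable {f g : Tuple}

lemma of_gEquiv (hf : IsPeak f) (h : GEquiv f g) (hnu : nu g = nu f) : IsPeak g where
  admissible := h.admissible_iff.1 hf.admissible
  nu_le hg := (hf.nu_le (h.trans _ _ _ hg)).trans_eq hnu.symm
  not_two_zero hg := hf.not_two_zero (h.trans _ _ _ hg)

lemma psi1 (hf : IsPeak f) : IsPeak (GMN.psi1 f) :=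
  hf.of_gEquiv hf.admissible.gEquiv_psi1 (by simp only [nu, GMN.psi1]; ring)

lemma psi2 (hf : IsPeak f) : IsPeak (GMN.psi2 f) :=
  hf.of_gEquiv hf.admissible.gEquiv_psi2 (by simp only [nu, GMN.psi2]; ring)

lemma swap (hf : IsPeak f) : IsPeak ⟨f.h1, f.h0, f.h2, f.q2, f.q1, f.q0⟩ := hf.psi2.psi1

lemma h1_le_crossing (hf : IsPeak f) (hq : f.q0 ≠ 0) : f.h1 ≤ crossing f := by
  have hle := hf.nu_le hf.admissible.gEquiv_sigma
  rw [nu_sigma hf.admissible hq] at hle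
  linarith

lemma q1_eq_zero (hf : IsPeak f) (h₀₁ : f.h0 ≤ f.h1) (h₁₂ : f.h1 ≤ f.h2) : f.q1 = 0 := by
  by_contra hq
  have hle : f.h2 ≤ min f.h1 f.q1 + min f.h0 f.q1 - f.q1 := hf.psi1.h1_le_crossing hq
  have hne : f.h1 ≠ f.q1 := hf.admissible.h_ne_q 1 1
  omega

lemma q0_ne_zero (hf : IsPeak f) (hq₁ : f.q1 = 0) : f.q0 ≠ 0 :=
  fun hq => hf.not_two_zero (.refl _) (.inl ⟨hq, hq₁⟩)

lemma h0_eq_h1 (hf : IsPeak f) (h₀₁ : f.h0 ≤ f.h1) (h₁₂ : f.h1 ≤ f.h2) : f.h0 = f.h1 := by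
  have hle := hf.h1_le_crossing (hf.q0_ne_zero (hf.q1_eq_zero h₀₁ h₁₂))
  unfold crossing at hle
  omega

lemma q0_mem_Ioo (hf : IsPeak f) (h₀₁ : f.h0 = f.h1) (hq₁ : f.q1 = 0) :
    f.q0 ∈ Set.Ioo f.h0 f.h2 := by
  have hle := hf.h1_le_crossing (hf.q0_ne_zero hq₁)
  have hne₀ : f.h0 ≠ f.q0 := hf.admissible.h_ne_q 0 0
  have hne₂ : f.h2 ≠ f.q0 := hf.admissible.h_ne_q 2 0
  rw [Set.mem_Ioo]
  unfold crossing at hle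
  omega

section TrapShape

variable {r s a b : ℤ}

lemma emod_mem_Ioo (hf : IsPeak (trapShape r s a b)) : a % (r + s) ∈ Set.Ioo r s :=
  hf.q0_mem_Ioo rfl rfl

lemma trapShape_step (hf : IsPeak (trapShape r s a b)) :
    IsPeak (trapShape r s (2 * a + b) (-a)) := by
  have hsigma := sigma_of_mem_Ioo (hf.q0_ne_zero rfl) (hf.q0_mem_Ioo rfl rfl)
  have hpeak := hf.of_gEquiv hf.admissible.gEquiv_sigma (by
    rw [hsigma]
    simp only [nu, trapShape]
    ring)
  rw [hsigma] at hpeak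
  convert hpeak.swap using 1
  have ha : a % (r + s) ≡ a [ZMOD r + s] := Int.mod_modEq a (r + s)
  have hb : b % (r + s) ≡ b [ZMOD r + s] := Int.mod_modEq b (r + s)
  have hq₀ : 2 * a + b ≡ 2 * (a % (r + s)) + b % (r + s) [ZMOD r + s] :=
    ((ha.mul_left 2).add hb).symm
  have hq₂ : -a ≡ r + s - a % (r + s) [ZMOD r + s] := by
    rw [sub_eq_add_neg]
    exact (Int.add_modEq_left.trans ha.neg).symm
  simp only [trapShape, Tuple.mk.injEq, true_and, Int.zero_emod, add_sub_cancel_left,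
    add_sub_cancel_right]
  exact ⟨hq₀, add_comm s r ▸ hq₂⟩

lemma trapShape_iterate (hf : IsPeak (trapShape r s a b)) (k : ℕ) :
    IsPeak (trapShape r s (a + k * (a + b)) (b - k * (a + b))) := by
  induction k with
  | zero => simpa using hf
  | succ k ih =>
    convert ih.trapShape_step using 2 <;> push_cast <;> ring

end TrapShape

lemma eq_trapShape (hf : IsPeak f) (h₀₁ : f.h0 ≤ f.h1) (h₁₂ : f.h1 ≤ f.h2) :
    f = trapShape f.h0 f.h2 f.q0 f.q2 := by
  have hh := hf.h0_eq_h1 h₀₁ h₁₂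
  have hq := hf.q1_eq_zero h₀₁ h₁₂
  have hIII := hf.admissible.1.2.2.1
  have hq₀ : f.q0 % (f.h0 + f.h2) = f.q0 :=
    Int.emod_eq_of_lt (hIII 0).1 ((hIII 0).2.trans_eq (add_comm f.h2 f.h0))
  have hq₂ : f.q2 % (f.h0 + f.h2) = f.q2 := by
    rw [hh]
    exact Int.emod_eq_of_lt (hIII 2).1 (hIII 2).2
  rw [trapShape, hq₀, hq₂]
  cases f
  simp only at hh hq
  subst hh hq
  rfl

lemma isTrap (hf : IsPeak f) (h₀₁ : f.h0 ≤ f.h1) (h₁₂ : f.h1 ≤ f.h2) : IsTrap f := by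
  have hshape : IsPeak (trapShape f.h0 f.h2 f.q0 f.q2) := hf.eq_trapShape h₀₁ h₁₂ ▸ hf
  refine ⟨f.h0, f.h2, hf.admissible.1.1 0, h₀₁.trans h₁₂, f, hf.admissible, .refl _, rfl,
    (hf.h0_eq_h1 h₀₁ h₁₂).symm, rfl, hf.q1_eq_zero h₀₁ h₁₂, fun k => ⟨.inr ?_, .inr ?_⟩⟩
  · exact (hshape.trapShape_iterate k).emod_mem_Ioo
  · rw [add_comm f.q0 f.q2]
    exact (IsPeak.trapShape_iterate (a := f.q2) (b := f.q0) hshape.swap k).emod_mem_Ioo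

lemma exists_isTrap (hf : IsPeak f) : ∃ g, GEquiv f g ∧ IsTrap g := by
  obtain ⟨g, ⟨hfg, hg⟩, h₀₁, h₁₂⟩ := exists_sorted (P := fun g => GEquiv f g ∧ IsPeak g)
    (fun g hg => ⟨hg.1.trans _ _ _ hg.2.admissible.gEquiv_psi1, hg.2.psi1⟩)
    (fun g hg => ⟨hg.1.trans _ _ _ hg.2.admissible.gEquiv_psi2, hg.2.psi2⟩) ⟨.refl _, hf⟩
  exact ⟨g, hfg, hg.isTrap h₀₁ h₁₂⟩

end IsPeak

/-- a trap-free `G`-orbit in which no 6-tuple has two vanishing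
`q`-components contains, above each of its elements, elements of strictly larger
complexity; hence it is infinite and of unbounded complexity. -/
theorem stmt_16 (f₀ : Tuple) (hf₀ : Admissible f₀)
    (htrapfree : ∀ g : Tuple, GEquiv f₀ g → ¬ IsTrap g)
    (hq : ∀ g : Tuple, GEquiv f₀ g →
      ¬ ((g.q0 = 0 ∧ g.q1 = 0) ∨ (g.q0 = 0 ∧ g.q2 = 0) ∨ (g.q1 = 0 ∧ g.q2 = 0))) :
    (∀ f : Tuple, GEquiv f₀ f → ∃ f' : Tuple, GEquiv f₀ f' ∧ nu f < nu f') ∧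
    {g : Tuple | GEquiv f₀ g}.Infinite ∧
    (∀ N : ℤ, ∃ g : Tuple, GEquiv f₀ g ∧ N < nu g) := by
  have hgrow (f : Tuple) (hf : GEquiv f₀ f) : ∃ f', GEquiv f₀ f' ∧ nu f < nu f' := by
    by_contra! hmax
    have hpeak : IsPeak f := ⟨hf.admissible_iff.1 hf₀, fun hg => hmax _ (hf.trans _ _ _ hg),
      fun hg => hq _ (hf.trans _ _ _ hg)⟩
    obtain ⟨g, hfg, hg⟩ := hpeak.exists_isTrap
    exact htrapfree g (hf.trans _ _ _ hfg) hg
  have hunbdd : ¬ BddAbove (nu '' {g | GEquiv f₀ g}) := by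
    intro hbdd
    obtain ⟨_, ⟨f, hf, rfl⟩, hmax⟩ := hbdd.exists_isGreatest_of_nonempty ⟨_, f₀, .refl _, rfl⟩
    obtain ⟨f', hf', hlt⟩ := hgrow f hf
    exact hlt.not_ge (hmax ⟨f', hf', rfl⟩)
  refine ⟨hgrow, (Set.infinite_of_not_bddAbove hunbdd).of_image nu, fun N => ?_⟩
  simpa using not_bddAbove_iff.1 hunbdd N
end GMN
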